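/- A finitely presented group G is hyperbolic if and only if its isoperimetric spectrum is linear, i.e., f_{G,X}(k,m,n) ∼ n/m for some (equivalently, any) finite generating set X of G, where n/m is regarded as an element of 𝓕 independent of k. -/

import Mathlib

open Function

namespace IsoSpecPaper

variable {ι : Type*} {G : Type*} [Group G]

/-- The (reduced) length of an element of a free group. -/
noncomputable def wnorm (w : FreeGroup ι) : ℕ :=
  @FreeGroup.norm ι (Classical.decEq ι) w

/-- `triv φ k` : the set of words of length at most `k` in the generators
(and their inverses) representing the identity of `G` under the marking `φ`. -/
noncomputable def triv (φ : FreeGroup ι →* G) (k : ℕ) : Set (FreeGroup ι) :=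
  {w | wnorm w ≤ k ∧ φ w = 1}

/-- `AreaLe R w l` : `w` is a product of `l` conjugates of elements of `R` or
their inverses in the free group. -/
def AreaLe (R : Set (FreeGroup ι)) (w : FreeGroup ι) (l : ℕ) : Prop :=
  ∃ L : List (FreeGroup ι × FreeGroup ι), L.length = l ∧
    (∀ p ∈ L, p.2 ∈ R ∨ p.2⁻¹ ∈ R) ∧
    w = (L.map fun p => p.1⁻¹ * p.2 * p.1).prod

/-- The area of `w` with respect to the set of relators `R`. -/
noncomputable def area (R : Set (FreeGroup ι)) (w : FreeGroup ι) : ℕ :=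
  sInf {l | AreaLe R w l}

/-- The isoperimetric spectrum of the marked group `(G, φ)`:
`isoSpec φ k m n = max { area_{S_m}(w) : w ∈ ⟪S_k⟫, ‖w‖ ≤ n }`. -/
noncomputable def isoSpec (φ : FreeGroup ι →* G) (k m n : ℕ) : ℕ :=
  sSup (area (triv φ m) '' {w | w ∈ Subgroup.normalClosure (triv φ k) ∧ wnorm w ≤ n})

/-- The real-valued isoperimetric spectrum. -/
noncomputable def isoSpecR (φ : FreeGroup ι →* G) : ℕ → ℕ → ℕ → ℝ :=
  fun k m n => (isoSpec φ k m n : ℝ)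

/-- The Dehn function of the presentation with relators `R`. -/
noncomputable def dehn (R : Set (FreeGroup ι)) (n : ℕ) : ℕ :=
  sSup (area R '' {w | w ∈ Subgroup.normalClosure R ∧ wnorm w ≤ n})

/-- The quasi-order `f ≼ g` on functions of triples `(k,m,n)` of positive integers
with `m ≥ k`. -/
def SpecLE (f g : ℕ → ℕ → ℕ → ℝ) : Prop :=
  ∃ C : ℕ, 0 < C ∧ ∀ k m n : ℕ, 0 < k → 0 < m → 0 < n → C * k ≤ m →
    f k (C * m) n ≤ C * g (C * k) m (C * n) + C * (n : ℝ) / m + C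

/-- Equivalence of isoperimetric functions: `f ∼ g`. -/
def SpecEquiv (f g : ℕ → ℕ → ℕ → ℝ) : Prop := SpecLE f g ∧ SpecLE g f

/-- The linear spectrum `(k,m,n) ↦ n/m`. -/
noncomputable def linSpec : ℕ → ℕ → ℕ → ℝ := fun _ m n => (n : ℝ) / m

/-- The word length of `g ∈ G` with respect to the marking `φ`. -/
noncomputable def wlen (φ : FreeGroup ι →* G) (g : G) : ℕ :=
  sInf {n | ∃ w : FreeGroup ι, wnorm w = n ∧ φ w = g}

/-- The word metric on `G` with respect to the marking `φ`. -/
noncomputable def wdist (φ : FreeGroup ι →* G) (g h : G) : ℕ := wlen φ (g⁻¹ * h)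

/-- Quasi-isometry of marked groups with respect to their word metrics. -/
noncomputable def QuasiIsometric {H : Type*} [Group H] {κ : Type*}
    (φ : FreeGroup ι →* G) (ψ : FreeGroup κ →* H) : Prop :=
  ∃ L : ℝ, 0 ≤ L ∧ ∃ (α : G → H) (β : H → G),
    (∀ x y : G, (wdist ψ (α x) (α y) : ℝ) ≤ L * wdist φ x y + L) ∧
    (∀ u v : H, (wdist φ (β u) (β v) : ℝ) ≤ L * wdist ψ u v + L) ∧
    (∀ t : H, (wdist ψ (α (β t)) t : ℝ) ≤ L) ∧
    (∀ s : G, (wdist φ (β (α s)) s : ℝ) ≤ L)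

/-- A (combinatorial) geodesic path of length `n` in the Cayley graph of `(G, φ)`:
consecutive vertices are at distance at most `1` and the endpoints are at
distance exactly `n`. -/
noncomputable def IsGeodesic (φ : FreeGroup ι →* G) {n : ℕ} (p : Fin (n + 1) → G) : Prop :=
  (∀ i : Fin n, wdist φ (p i.castSucc) (p i.succ) ≤ 1) ∧
  wdist φ (p 0) (p (Fin.last n)) = n

/-- Every vertex of the path `p` lies within distance `δ` of the set `A`. -/
noncomputable def ThinAt (φ : FreeGroup ι →* G) (δ : ℝ) {n : ℕ}
    (p : Fin (n + 1) → G) (A : Set G) : Prop :=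
  ∀ i, ∃ a ∈ A, (wdist φ (p i) a : ℝ) ≤ δ

/-- The Cayley graph of `(G, φ)` is `δ`-hyperbolic: every geodesic triangle is `δ`-thin. -/
noncomputable def HypConst (φ : FreeGroup ι →* G) (δ : ℝ) : Prop :=
  ∀ (n₁ n₂ n₃ : ℕ) (p : Fin (n₁ + 1) → G) (q : Fin (n₂ + 1) → G) (r : Fin (n₃ + 1) → G),
    IsGeodesic φ p → IsGeodesic φ q → IsGeodesic φ r →
    p (Fin.last n₁) = q 0 → q (Fin.last n₂) = r 0 → r (Fin.last n₃) = p 0 →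
    ThinAt φ δ p (Set.range q ∪ Set.range r) ∧
    ThinAt φ δ q (Set.range r ∪ Set.range p) ∧
    ThinAt φ δ r (Set.range p ∪ Set.range q)

/-- The marked group `(G, φ)` is hyperbolic. -/
noncomputable def IsHyperbolic (φ : FreeGroup ι →* G) : Prop :=
  ∃ δ : ℝ, 0 ≤ δ ∧ HypConst φ δ

/-- `G` (marked by `φ`) is a limit (direct limit) of hyperbolic groups. -/
noncomputable def LimitOfHyperbolic (φ : FreeGroup ι →* G) : Prop :=
  Surjective φ ∧ ∃ R : ℕ → Set (FreeGroup ι),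
    (∀ i j, i ≤ j → R i ⊆ R j) ∧
    φ.ker = Subgroup.normalClosure (⋃ i, R i) ∧
    ∀ i, IsHyperbolic (QuotientGroup.mk' (Subgroup.normalClosure (R i)))

/-- `G` (marked by `φ`) is well-approximated by hyperbolic groups. -/
noncomputable def WellApproximated (φ : FreeGroup ι →* G) : Prop :=
  Surjective φ ∧ ∃ R : ℕ → Set (FreeGroup ι),
    (∀ i j, i ≤ j → R i ⊆ R j) ∧
    φ.ker = Subgroup.normalClosure (⋃ i, R i) ∧
    (∀ i, IsHyperbolic (QuotientGroup.mk' (Subgroup.normalClosure (R i)))) ∧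
    ∃ C : ℕ, 0 < C ∧ ∀ i : ℕ, 0 < i →
      (∀ w : FreeGroup ι, wnorm w ≤ i → φ w = 1 →
        w ∈ Subgroup.normalClosure (R i)) ∧
      HypConst (QuotientGroup.mk' (Subgroup.normalClosure (R i))) ((C * i : ℕ) : ℝ)

section helpers

theorem wnorm_mul_le (x y : FreeGroup ι) : wnorm (x * y) ≤ wnorm x + wnorm y :=
  @FreeGroup.norm_mul_le ι (Classical.decEq ι) x y

theorem wnorm_inv (x : FreeGroup ι) : wnorm x⁻¹ = wnorm x :=
  @FreeGroup.norm_inv_eq ι (Classical.decEq ι) x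

theorem wnorm_one : wnorm (1 : FreeGroup ι) = 0 :=
  @FreeGroup.norm_one ι (Classical.decEq ι)

theorem wnorm_mk_le (L : List (ι × Bool)) : wnorm (FreeGroup.mk L) ≤ L.length :=
  @FreeGroup.norm_mk_le ι L (Classical.decEq ι)

theorem exists_list (w : FreeGroup ι) :
    ∃ L : List (ι × Bool), FreeGroup.mk L = w ∧ L.length = wnorm w :=
  ⟨@FreeGroup.toWord ι (Classical.decEq ι) w, @FreeGroup.mk_toWord ι (Classical.decEq ι) w, rfl⟩

variable {φ : FreeGroup ι →* G}

theorem wlen_le (w : FreeGroup ι) : wlen φ (φ w) ≤ wnorm w :=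
  Nat.sInf_le ⟨w, rfl, rfl⟩

theorem wlen_spec (hφ : Surjective φ) (g : G) : ∃ w, wnorm w = wlen φ g ∧ φ w = g := by
  obtain ⟨w, hw⟩ := hφ g
  exact Nat.sInf_mem (s := {n | ∃ w : FreeGroup ι, wnorm w = n ∧ φ w = g}) ⟨_, w, rfl, hw⟩

theorem wlen_mul (hφ : Surjective φ) (g h : G) : wlen φ (g * h) ≤ wlen φ g + wlen φ h := by
  obtain ⟨w, hw, rfl⟩ := wlen_spec hφ g
  obtain ⟨v, hv, rfl⟩ := wlen_spec hφ h
  rw [← hw, ← hv, ← map_mul]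
  exact (wlen_le _).trans (wnorm_mul_le _ _)

theorem wlen_inv_le (hφ : Surjective φ) (g : G) : wlen φ g⁻¹ ≤ wlen φ g := by
  obtain ⟨w, hw, rfl⟩ := wlen_spec hφ g
  rw [← hw, ← map_inv, ← wnorm_inv]
  exact wlen_le _

theorem wd_self (x : G) : wdist φ x x = 0 := by
  have := wlen_le (φ := φ) 1
  rw [wnorm_one, map_one] at this
  simpa [wdist] using this

theorem wd_comm (hφ : Surjective φ) (x y : G) : wdist φ x y = wdist φ y x := by
  have h : ∀ x y : G, wdist φ x y ≤ wdist φ y x := fun x y => by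
    have := wlen_inv_le hφ (y⁻¹ * x)
    simpa [wdist] using this
  exact le_antisymm (h _ _) (h _ _)

theorem wd_tri (hφ : Surjective φ) (x y z : G) : wdist φ x z ≤ wdist φ x y + wdist φ y z := by
  have := wlen_mul hφ (x⁻¹ * y) (y⁻¹ * z)
  simpa [wdist, mul_assoc] using this

/-- geodesic path parametrized by naturals -/
def Geo (φ : FreeGroup ι →* G) (γ : ℕ → G) (n : ℕ) : Prop :=
  ∀ i j, i ≤ j → j ≤ n → wdist φ (γ i) (γ j) = j - i

theorem lip_le (hφ : Surjective φ) {γ : ℕ → G} {n : ℕ}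
    (h : ∀ i, i < n → wdist φ (γ i) (γ (i + 1)) ≤ 1) (i j : ℕ) (hij : i ≤ j) (hj : j ≤ n) :
    wdist φ (γ i) (γ j) ≤ j - i := by
  induction j, hij using Nat.le_induction with
  | base => simp [wd_self]
  | succ j hij ih =>
    have := ih (by omega)
    have := h j (by omega)
    have := wd_tri hφ (γ i) (γ j) (γ (j + 1))
    omega

theorem geo_of_lip (hφ : Surjective φ) {γ : ℕ → G} {n : ℕ}
    (h : ∀ i, i < n → wdist φ (γ i) (γ (i + 1)) ≤ 1) (hn : wdist φ (γ 0) (γ n) = n) :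
    Geo φ γ n := by
  intro i j hij hj
  have h1 := lip_le hφ h 0 i (by omega) (by omega)
  have h2 := lip_le hφ h i j (by omega) (by omega)
  have h3 := lip_le hφ h j n (by omega) (by omega)
  have h4 := wd_tri hφ (γ 0) (γ i) (γ n)
  have h5 := wd_tri hφ (γ i) (γ j) (γ n)
  omega

theorem word_path (x : G) (L : List (ι × Bool)) (i j : ℕ) (hij : i ≤ j) :
    wdist φ (x * φ (FreeGroup.mk (L.take i))) (x * φ (FreeGroup.mk (L.take j))) ≤ j - i := by
  have h : L.take j = L.take i ++ (L.take j).drop i := by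
    conv_lhs => rw [← List.take_append_drop i (L.take j)]
    rw [List.take_take, min_eq_left hij]
  have h2 : φ (FreeGroup.mk (L.take j)) =
      φ (FreeGroup.mk (L.take i)) * φ (FreeGroup.mk ((L.take j).drop i)) := by
    rw [← map_mul, FreeGroup.mul_mk, ← h]
  rw [h2]
  have := (wlen_le (φ := φ) (FreeGroup.mk ((L.take j).drop i))).trans (wnorm_mk_le _)
  simp only [wdist, mul_inv_rev, mul_assoc, inv_mul_cancel_left]
  refine this.trans ?_
  simp
  omega

theorem exists_geo (hφ : Surjective φ) (x y : G) :
    ∃ γ : ℕ → G, γ 0 = x ∧ γ (wdist φ x y) = y ∧ Geo φ γ (wdist φ x y) := by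
  obtain ⟨w, hw, hw'⟩ := wlen_spec hφ (x⁻¹ * y)
  obtain ⟨L, rfl, hL⟩ := exists_list w
  have hlen : L.length = wdist φ x y := hL.trans hw
  have e0 : x * φ (FreeGroup.mk (L.take 0)) = x := by
    rw [List.take_zero, ← FreeGroup.one_eq_mk]; simp
  have e1 : x * φ (FreeGroup.mk (L.take (wdist φ x y))) = y := by
    rw [← hlen, List.take_length, hw']; simp
  refine ⟨fun i => x * φ (FreeGroup.mk (L.take i)), e0, e1, ?_⟩
  apply geo_of_lip hφ
  · intro i hi
    have := word_path (φ := φ) x L i (i + 1) (by omega)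
    omega
  · simp only [e0, e1]

theorem Geo.rev (hφ : Surjective φ) {γ : ℕ → G} {n : ℕ} (h : Geo φ γ n) :
    Geo φ (fun i => γ (n - i)) n := by
  intro i j hij hj
  have := h (n - j) (n - i) (by omega) (by omega)
  simp only []
  rw [wd_comm hφ, this]; omega

theorem Geo.mono {γ : ℕ → G} {n m : ℕ} (h : Geo φ γ n) (hm : m ≤ n) : Geo φ γ m :=
  fun i j hij hj => h i j hij (hj.trans hm)

theorem Geo.le {γ : ℕ → G} {n : ℕ} (hφ : Surjective φ) (h : Geo φ γ n) {i j : ℕ}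
    (hi : i ≤ n) (hj : j ≤ n) : wdist φ (γ i) (γ j) = (j - i) + (i - j) := by
  rcases le_total i j with hij | hij
  · rw [h i j hij hj]; omega
  · rw [wd_comm hφ, h j i hij hi]; omega

theorem geo_of_isGeodesic (hφ : Surjective φ) {n : ℕ} {p : Fin (n + 1) → G}
    (h : IsGeodesic φ p) : Geo φ (fun i => p ⟨min i n, by omega⟩) n := by
  apply geo_of_lip hφ
  · intro i hi
    have := h.1 ⟨i, hi⟩
    convert this using 3
    · ext; simp; omega
    · ext; simp; omega
  · have := h.2
    convert this using 3 <;> (ext; simp)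

theorem isGeodesic_of_geo {n : ℕ} {γ : ℕ → G} (h : Geo φ γ n) :
    IsGeodesic φ (fun i : Fin (n + 1) => γ i) := by
  constructor
  · intro i
    have := h i (i + 1) (by omega) (by omega)
    simp only [Fin.val_castSucc, Fin.val_succ]
    omega
  · have := h 0 n (by omega) le_rfl
    simpa using this

/-- one-sided thinness for `Geo` triangles of perimeter at most `N`. -/
def Thin (φ : FreeGroup ι →* G) (N D : ℕ) : Prop :=
  ∀ (α β γ : ℕ → G) (a b c : ℕ), Geo φ α a → Geo φ β b → Geo φ γ c →
    α a = β 0 → β b = γ 0 → γ c = α 0 → a + b + c ≤ N →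
    ∀ i ≤ a, (∃ j ≤ b, wdist φ (α i) (β j) ≤ D) ∨ (∃ j ≤ c, wdist φ (α i) (γ j) ≤ D)

theorem thin_of_hyp {δ : ℝ} (h : HypConst φ δ) (N : ℕ) : Thin φ N ⌊δ⌋₊ := by
  intro α β γ a b c hα hβ hγ h1 h2 h3 _ i hi
  have := (h a b c _ _ _ (isGeodesic_of_geo hα) (isGeodesic_of_geo hβ) (isGeodesic_of_geo hγ)
    (by simpa using h1) (by simpa using h2) (by simpa using h3)).1 ⟨i, by omega⟩
  obtain ⟨x, hx, hd⟩ := this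
  have hd' := Nat.le_floor hd
  rcases hx with ⟨j, rfl⟩ | ⟨j, rfl⟩
  · exact Or.inl ⟨j, by omega, hd'⟩
  · exact Or.inr ⟨j, by omega, hd'⟩

theorem hyp_of_thin (hφ : Surjective φ) {D : ℕ} (h : ∀ N, Thin φ N D) : HypConst φ (D : ℝ) := by
  have key : ∀ (n₁ n₂ n₃ : ℕ) (p : Fin (n₁ + 1) → G) (q : Fin (n₂ + 1) → G)
    (r : Fin (n₃ + 1) → G), IsGeodesic φ p → IsGeodesic φ q → IsGeodesic φ r →
    p (Fin.last n₁) = q 0 → q (Fin.last n₂) = r 0 → r (Fin.last n₃) = p 0 →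
    ThinAt φ D p (Set.range q ∪ Set.range r) := by
    intro a b c p q r hp hq hr h1 h2 h3 i
    have := h _ _ _ _ a b c (geo_of_isGeodesic hφ hp) (geo_of_isGeodesic hφ hq)
      (geo_of_isGeodesic hφ hr) (by convert h1 using 2 <;> (ext; simp))
      (by convert h2 using 2 <;> (ext; simp))
      (by convert h3 using 2 <;> (ext; simp)) le_rfl i (by omega)
    have e : (⟨min (i : ℕ) a, by omega⟩ : Fin (a + 1)) = i := by ext; simp; omega
    simp only [e] at this
    rcases this with ⟨j, hj, hd⟩ | ⟨j, hj, hd⟩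
    · exact ⟨_, Or.inl ⟨_, rfl⟩, by exact_mod_cast hd⟩
    · exact ⟨_, Or.inr ⟨_, rfl⟩, by exact_mod_cast hd⟩
  intro n₁ n₂ n₃ p q r hp hq hr h1 h2 h3
  exact ⟨key _ _ _ p q r hp hq hr h1 h2 h3, key _ _ _ q r p hq hr hp h2 h3 h1,
    key _ _ _ r p q hr hp hq h3 h1 h2⟩

/-! ### four point condition -/

theorem center (hφ : Surjective φ) {D : ℕ} (h : ∀ N, Thin φ N D) (w x y : G) {γ : ℕ → G} {n : ℕ}
    (hγ : Geo φ γ n) (h0 : γ 0 = x) (hn : γ n = y) :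
    ∃ i ≤ n, 2 * wdist φ w (γ i) + wdist φ x y ≤ wdist φ w x + wdist φ w y + 4 * D + 2 := by
  obtain ⟨α, α0, α1, hα⟩ := exists_geo hφ y w
  obtain ⟨β, β0, β1, hβ⟩ := exists_geo hφ w x
  set a := wdist φ y w
  set b := wdist φ w x
  have T := h _ γ α β n a b hγ hα hβ (by rw [hn, α0]) (by rw [α1, β0]) (by rw [β1, h0]) le_rfl
  have key : ∃ i ≤ n, (∃ j ≤ b, wdist φ (γ i) (β j) ≤ D) ∧
      (∃ j ≤ a, wdist φ (γ i) (α j) ≤ D + 1) := by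
    by_contra hcon
    push Not at hcon
    have all : ∀ i ≤ n, ∃ j ≤ b, wdist φ (γ i) (β j) ≤ D := by
      intro i
      induction i with
      | zero => intro _; exact ⟨b, le_rfl, by rw [β1, h0, wd_self]; omega⟩
      | succ i ih =>
        intro hi
        rcases T (i + 1) hi with ⟨j, hj, hd⟩ | hr
        · exfalso
          have h1 := hcon i (by omega) (ih (by omega)) j hj
          have h2 := wd_tri hφ (γ i) (γ (i + 1)) (α j)
          have h3 := hγ i (i + 1) (by omega) hi
          omega
        · exact hr
    have := hcon n le_rfl (all n le_rfl) 0 (by omega)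
    rw [hn, α0, wd_self] at this
    omega
  obtain ⟨i, hi, ⟨j, hj, hd⟩, ⟨k, hk, he⟩⟩ := key
  refine ⟨i, hi, ?_⟩
  have e1 := hβ 0 j (by omega) hj
  have e2 := hβ j b hj le_rfl
  have e3 := hα 0 k (by omega) hk
  have e4 := hα k a hk le_rfl
  rw [β0] at e1
  rw [β1] at e2
  rw [α0] at e3
  rw [α1] at e4
  have t1 := wd_tri hφ w (β j) (γ i)
  have t2 := wd_tri hφ x (β j) (γ i)
  have t3 := wd_tri hφ w (α k) (γ i)
  have t4 := wd_tri hφ y (α k) (γ i)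
  have t5 := wd_tri hφ x (γ i) y
  have c1 := wd_comm hφ (β j) (γ i)
  have c2 := wd_comm hφ (α k) (γ i)
  have c3 := wd_comm hφ (β j) x
  have c4 := wd_comm hφ (α k) w
  have c5 := wd_comm hφ (γ i) y
  have c6 : a = wdist φ w y := wd_comm hφ y w
  omega

theorem gprod_le (hφ : Surjective φ) (w x y : G) {γ : ℕ → G} {n : ℕ}
    (hγ : Geo φ γ n) (h0 : γ 0 = x) (hn : γ n = y) (i : ℕ) (hi : i ≤ n) :
    wdist φ w x + wdist φ w y ≤ 2 * wdist φ w (γ i) + wdist φ x y := by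
  have e1 := hγ 0 i (by omega) hi
  have e2 := hγ i n hi le_rfl
  have e3 := hγ 0 n (by omega) le_rfl
  rw [h0] at e1 e3
  rw [hn] at e2 e3
  have t1 := wd_tri hφ w (γ i) x
  have t2 := wd_tri hφ w (γ i) y
  have c := wd_comm hφ (γ i) x
  omega

theorem four_point (hφ : Surjective φ) {D : ℕ} (h : ∀ N, Thin φ N D) (w x y z : G) :
    (wdist φ w x + wdist φ w y + wdist φ x z ≤
      wdist φ w x + wdist φ w z + wdist φ x y + 6 * D + 2) ∨
    (wdist φ w y + wdist φ w z + wdist φ x z ≤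
      wdist φ w x + wdist φ w z + wdist φ y z + 6 * D + 2) := by
  obtain ⟨γ, γ0, γ1, hγ⟩ := exists_geo hφ x z
  obtain ⟨α, α0, α1, hα⟩ := exists_geo hφ z y
  obtain ⟨β, β0, β1, hβ⟩ := exists_geo hφ y x
  obtain ⟨i, hi, hc⟩ := center hφ h w x z hγ γ0 γ1
  have T := h _ γ α β _ _ _ hγ hα hβ (by rw [γ1, α0]) (by rw [α1, β0]) (by rw [β1, γ0]) le_rfl i hi
  rcases T with ⟨j, hj, hd⟩ | ⟨j, hj, hd⟩
  · right
    have := gprod_le hφ w z y hα α0 α1 j hj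
    have t := wd_tri hφ w (γ i) (α j)
    have c := wd_comm hφ z y
    omega
  · left
    have := gprod_le hφ w y x hβ β0 β1 j hj
    have t := wd_tri hφ w (γ i) (β j)
    have c := wd_comm hφ x y
    omega

/-! ### area -/

theorem areaLe_of_mem {R : Set (FreeGroup ι)} {w : FreeGroup ι} (h : w ∈ R) : AreaLe R w 1 :=
  ⟨[(1, w)], rfl, by simp [h], by simp⟩

theorem areaLe_mul {R : Set (FreeGroup ι)} {w v : FreeGroup ι} {l k : ℕ} (hw : AreaLe R w l)
    (hv : AreaLe R v k) : AreaLe R (w * v) (l + k) := by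
  obtain ⟨L, h1, h2, h3⟩ := hw
  obtain ⟨M, h4, h5, h6⟩ := hv
  refine ⟨L ++ M, by simp [h1, h4], ?_, by simp [h3, h6]⟩
  intro p hp
  rcases List.mem_append.1 hp with hp | hp
  exacts [h2 p hp, h5 p hp]

theorem areaLe_conj {R : Set (FreeGroup ι)} {r : FreeGroup ι} (h : r ∈ R) (f : FreeGroup ι) :
    AreaLe R (f * r * f⁻¹) 1 :=
  ⟨[(f⁻¹, r)], rfl, by simp [h], by simp⟩

theorem exists_areaLe {R : Set (FreeGroup ι)} {w : FreeGroup ι}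
    (h : w ∈ Subgroup.normalClosure R) : ∃ l, AreaLe R w l := by
  rw [Subgroup.normalClosure] at h
  induction h using Subgroup.closure_induction'' with
  | mem x hx =>
    obtain ⟨a, ha, hc⟩ := Group.mem_conjugatesOfSet_iff.1 hx
    obtain ⟨c, rfl⟩ := isConj_iff.1 hc
    exact ⟨1, areaLe_conj ha c⟩
  | inv_mem x hx =>
    obtain ⟨a, ha, hc⟩ := Group.mem_conjugatesOfSet_iff.1 hx
    obtain ⟨c, rfl⟩ := isConj_iff.1 hc
    exact ⟨1, [(c⁻¹, a⁻¹)], rfl, by simp [ha], by simp [mul_assoc]⟩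
  | one => exact ⟨0, [], rfl, by simp, by simp⟩
  | mul x y hx hy ihx ihy =>
    obtain ⟨l, hl⟩ := ihx
    obtain ⟨k, hk⟩ := ihy
    exact ⟨_, areaLe_mul hl hk⟩

theorem area_spec {R : Set (FreeGroup ι)} {w : FreeGroup ι}
    (h : w ∈ Subgroup.normalClosure R) : AreaLe R w (area R w) :=
  Nat.sInf_mem (s := {l | AreaLe R w l}) (exists_areaLe h)

theorem area_le {R : Set (FreeGroup ι)} {w : FreeGroup ι} {l : ℕ} (h : AreaLe R w l) :
    area R w ≤ l := Nat.sInf_le h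

theorem triv_mono {k m : ℕ} (h : k ≤ m) : triv φ k ⊆ triv φ m :=
  fun _ hw => ⟨hw.1.trans h, hw.2⟩

theorem ball_finite [Finite ι] (n : ℕ) : {w : FreeGroup ι | wnorm w ≤ n}.Finite := by
  have := (List.finite_length_le (ι × Bool) n).image FreeGroup.mk
  refine this.subset ?_
  intro w hw
  obtain ⟨L, rfl, hL⟩ := exists_list w
  exact ⟨L, by simpa [hL] using hw, rfl⟩

theorem ker_of_nc {k : ℕ} {w : FreeGroup ι} (h : w ∈ Subgroup.normalClosure (triv φ k)) :
    φ w = 1 := by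
  have : Subgroup.normalClosure (triv φ k) ≤ φ.ker :=
    Subgroup.normalClosure_le_normal fun x hx => hx.2
  exact this h

/-! ### hyperbolic implies linear -/

theorem dehn_step (hφ : Surjective φ) {D m : ℕ} (h : ∀ N, Thin φ N D) (hm : 6 * D + 2 ≤ m)
    (L : List (ι × Bool)) (hL : φ (FreeGroup.mk L) = 1) (hlen : 16 * m ≤ L.length) :
    ∃ L₁ U L₂ : List (ι × Bool), L = L₁ ++ U ++ L₂ ∧ U.length ≤ 16 * m ∧
      wlen φ (φ (FreeGroup.mk U)) + m ≤ U.length := by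
  by_contra hcon
  push Not at hcon
  set y : ℕ → G := fun i => φ (FreeGroup.mk (L.take i)) with hy
  have up : ∀ i j, i ≤ j → wdist φ (y i) (y j) ≤ j - i := by
    intro i j hij
    have := word_path (φ := φ) 1 L i j hij
    simpa [hy] using this
  have low : ∀ i j, i ≤ j → j ≤ L.length → j - i ≤ 16 * m → j - i < wdist φ (y i) (y j) + m := by
    intro i j hij hj hjm
    have e : L = L.take i ++ (L.take j).drop i ++ L.drop j := by
      conv_lhs => rw [← List.take_append_drop j L, ← List.take_append_drop i (L.take j)]
      rw [List.take_take, min_eq_left hij]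
    have hl : ((L.take j).drop i).length = j - i := by simp; omega
    have := hcon _ _ _ e (by omega)
    have e2 : y j = y i * φ (FreeGroup.mk ((L.take j).drop i)) := by
      simp only [hy]
      rw [← map_mul, FreeGroup.mul_mk]
      congr 2
      conv_lhs => rw [← List.take_append_drop i (L.take j)]
      rw [List.take_take, min_eq_left hij]
    rw [wdist, e2, inv_mul_cancel_left]
    omega
  set x : ℕ → G := fun i => y (i * (8 * m)) with hx
  have key : ∀ i, (i + 1) * (8 * m) ≤ L.length →
      wdist φ (x 0) (x i) + wdist φ (x i) (x (i + 1)) ≤ wdist φ (x 0) (x (i + 1)) + 2 * m := by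
    intro i
    induction i with
    | zero => intro _; simp [wd_self]
    | succ i ih =>
      intro hi
      have hi' : i * (8 * m) + 16 * m ≤ L.length := by linarith
      have s1 : (i + 1) * (8 * m) = i * (8 * m) + 8 * m := by ring
      have s2 : (i + 1 + 1) * (8 * m) = i * (8 * m) + 16 * m := by ring
      have I := ih (by omega)
      have l1 := low (i * (8 * m)) (i * (8 * m) + 8 * m) (by omega) (by omega) (by omega)
      have l2 := low (i * (8 * m)) (i * (8 * m) + 16 * m) (by omega) (by omega) (by omega)
      have u1 := up (i * (8 * m)) (i * (8 * m) + 8 * m) (by omega)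
      have u2 := up (i * (8 * m) + 8 * m) (i * (8 * m) + 16 * m) (by omega)
      have F := four_point hφ h (x (i + 1)) (x i) (x 0) (x (i + 1 + 1))
      have x0 : x i = y (i * (8 * m)) := rfl
      have x1 : x (i + 1) = y (i * (8 * m) + 8 * m) := by simp only [hx, s1]
      have x2 : x (i + 1 + 1) = y (i * (8 * m) + 16 * m) := by simp only [hx, s2]
      rw [← x0, ← x1] at l1 u1
      rw [← x0, ← x2] at l2
      rw [← x1, ← x2] at u2
      have c1 := wd_comm hφ (x (i + 1)) (x i)
      have c2 := wd_comm hφ (x (i + 1)) (x 0)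
      have c3 := wd_comm hφ (x i) (x 0)
      omega
  have grow : ∀ i, i * (8 * m) ≤ L.length → i * (5 * m) ≤ wdist φ (x 0) (x i) := by
    intro i
    induction i with
    | zero => intro _; simp
    | succ i ih =>
      intro hi
      have s1 : (i + 1) * (8 * m) = i * (8 * m) + 8 * m := by ring
      have I := ih (by omega)
      have K := key i hi
      have l1 := low (i * (8 * m)) (i * (8 * m) + 8 * m) (by omega) (by omega) (by omega)
      have x0 : x i = y (i * (8 * m)) := rfl
      have x1 : x (i + 1) = y (i * (8 * m) + 8 * m) := by simp only [hx, s1]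
      rw [← x0, ← x1] at l1
      have : (i + 1) * (5 * m) = i * (5 * m) + 5 * m := by ring
      omega
  set N := L.length / (8 * m) with hN
  have hN2 : 2 ≤ N := by
    rw [hN, Nat.le_div_iff_mul_le (by omega)]; omega
  have hN3 : N * (8 * m) ≤ L.length := Nat.div_mul_le_self _ _
  have hN4 : L.length < N * (8 * m) + 8 * m := by
    have := Nat.lt_div_mul_add (a := L.length) (b := 8 * m) (by omega)
    omega
  have g := grow N hN3
  have e0 : x 0 = 1 := by
    simp only [hx, hy, zero_mul, List.take_zero, ← FreeGroup.one_eq_mk, map_one]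
  have e1 : y L.length = 1 := by simp only [hy, List.take_length, hL]
  have u := up _ _ hN3
  rw [e1, ← e0, wd_comm hφ] at u
  have u' : wdist φ (x 0) (x N) ≤ L.length - N * (8 * m) := u
  have : 2 * (5 * m) ≤ N * (5 * m) := Nat.mul_le_mul_right _ hN2
  omega

theorem area_linear (hφ : Surjective φ) {D m : ℕ} (h : ∀ N, Thin φ N D) (hm : 6 * D + 2 ≤ m) :
    ∀ (n : ℕ) (w : FreeGroup ι), φ w = 1 → wnorm w ≤ n →
      ∃ l, AreaLe (triv φ (32 * m)) w l ∧ l * m ≤ n + m := by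
  intro n
  induction n using Nat.strong_induction_on with
  | _ n ih =>
    intro w hw hn
    by_cases hs : wnorm w ≤ 32 * m
    · exact ⟨1, areaLe_of_mem ⟨hs, hw⟩, by omega⟩
    obtain ⟨L, rfl, hL⟩ := exists_list w
    obtain ⟨L₁, U, L₂, e, hU, hUm⟩ := dehn_step hφ h hm L hw (by omega)
    obtain ⟨u, hu, hu'⟩ := wlen_spec hφ (φ (FreeGroup.mk U))
    have eL : FreeGroup.mk L = FreeGroup.mk L₁ * FreeGroup.mk U * FreeGroup.mk L₂ := by
      rw [e, FreeGroup.mul_mk, FreeGroup.mul_mk]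
    have hlen : L.length = L₁.length + U.length + L₂.length := by rw [e]; simp; omega
    have n1 := wnorm_mul_le (FreeGroup.mk L₁ * u) (FreeGroup.mk L₂)
    have n2 := wnorm_mul_le (FreeGroup.mk L₁) u
    have n3 := wnorm_mk_le L₁
    have n4 := wnorm_mk_le L₂
    obtain ⟨l, hl, hlm⟩ := ih (n - m) (by omega) (FreeGroup.mk L₁ * u * FreeGroup.mk L₂)
      (by rw [eL, map_mul, map_mul] at hw; rw [map_mul, map_mul, hu', hw]) (by omega)
    refine ⟨1 + l, ?_, by rw [add_mul]; omega⟩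
    have r : FreeGroup.mk U * u⁻¹ ∈ triv φ (32 * m) := by
      refine ⟨?_, by simp [hu']⟩
      have := wnorm_mul_le (FreeGroup.mk U) u⁻¹
      rw [wnorm_inv] at this
      have := wnorm_mk_le U
      omega
    have := areaLe_mul (areaLe_conj r (FreeGroup.mk L₁)) hl
    convert this using 1
    rw [eL]; group

theorem areaLe_mono {R S : Set (FreeGroup ι)} (h : R ⊆ S) {w : FreeGroup ι} {l : ℕ}
    (hw : AreaLe R w l) : AreaLe S w l := by
  obtain ⟨L, h1, h2, h3⟩ := hw
  exact ⟨L, h1, fun p hp => (h2 p hp).imp (fun x => h x) (fun x => h x), h3⟩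

theorem linSpec_le : SpecLE linSpec (isoSpecR φ) := by
  refine ⟨1, one_pos, fun k m n hk hm hn _ => ?_⟩
  simp only [linSpec, isoSpecR, Nat.cast_one, one_mul]
  have : (0 : ℝ) ≤ (isoSpec φ k m n : ℝ) := Nat.cast_nonneg _
  linarith

theorem spec_of_hyp (hφ : Surjective φ) (h : IsHyperbolic φ) :
    SpecLE (isoSpecR φ) linSpec := by
  obtain ⟨δ, _, hδ⟩ := h
  have T := thin_of_hyp hδ
  set D := ⌊δ⌋₊
  refine ⟨32 + (6 * D + 2), by omega, fun k m n hk hm hn hkm => ?_⟩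
  set C := 32 + (6 * D + 2) with hC
  have hCm : C ≤ m := le_trans (by nlinarith) hkm
  have bound : ∀ a ∈ area (triv φ (C * m)) ''
      {w | w ∈ Subgroup.normalClosure (triv φ k) ∧ wnorm w ≤ n}, a ≤ (n + m) / m := by
    rintro _ ⟨w, ⟨hw, hwn⟩, rfl⟩
    obtain ⟨l, hl, hlm⟩ := area_linear hφ T (m := m) (by omega) n w (ker_of_nc hw) hwn
    refine (area_le (areaLe_mono (triv_mono ?_) hl)).trans ((Nat.le_div_iff_mul_le hm).2 hlm)
    exact Nat.mul_le_mul_right _ (by omega)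
  have hs : isoSpec φ k (C * m) n ≤ (n + m) / m :=
    csSup_le ⟨_, 1, ⟨one_mem _, by rw [wnorm_one]; omega⟩, rfl⟩ bound
  have hs' : (isoSpec φ k (C * m) n : ℝ) ≤ (n : ℝ) / m + 1 := by
    have h1 : (isoSpec φ k (C * m) n : ℝ) ≤ (((n + m) / m : ℕ) : ℝ) := by exact_mod_cast hs
    refine h1.trans (Nat.cast_div_le.trans ?_)
    have : (m : ℝ) ≠ 0 := by positivity
    push_cast
    rw [add_div, div_self this]
  have hC1 : (1 : ℝ) ≤ C := by exact_mod_cast (by omega : 1 ≤ C)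
  have hnm : (0 : ℝ) ≤ (n : ℝ) / m := by positivity
  simp only [isoSpecR, linSpec]
  have p1 : (0 : ℝ) ≤ (C : ℝ) * (((C * n : ℕ) : ℝ) / m) := by positivity
  have p2 : (n : ℝ) / m ≤ C * (n : ℝ) / m := by
    rw [mul_div_assoc]; nlinarith
  linarith

/-! ### the cochain `u dv` -/

/-- value of (twice) the cochain `u dv` on an edge -/
def ed (u v : G → ℤ) (x y : G) : ℤ := (u x + u y) * (v y - v x)

/-- integral along a word -/
def integ (φ : FreeGroup ι →* G) (u v : G → ℤ) : G → List (ι × Bool) → ℤ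
  | _, [] => 0
  | x, s :: L => ed u v x (x * φ (FreeGroup.mk [s])) + integ φ u v (x * φ (FreeGroup.mk [s])) L

theorem integ_append (u v : G → ℤ) (L M : List (ι × Bool)) (x : G) :
    integ φ u v x (L ++ M) = integ φ u v x L + integ φ u v (x * φ (FreeGroup.mk L)) M := by
  induction L generalizing x with
  | nil => simp [integ, ← FreeGroup.one_eq_mk]
  | cons s L ih =>
    have : (FreeGroup.mk (s :: L) : FreeGroup ι) = FreeGroup.mk [s] * FreeGroup.mk L := by
      rw [FreeGroup.mul_mk]; rfl
    rw [List.cons_append, integ, ih, integ, this, map_mul, mul_assoc, add_assoc]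

theorem integ_step (u v : G → ℤ) (x : G) (L M : List (ι × Bool)) (h : FreeGroup.Red.Step L M) :
    integ φ u v x L = integ φ u v x M := by
  cases h with
  | @not L₁ L₂ s b =>
    rw [integ_append, integ_append]
    congr 1
    set y := x * φ (FreeGroup.mk L₁)
    have e : φ (FreeGroup.mk [(s, !b)]) = (φ (FreeGroup.mk [(s, b)]))⁻¹ := by
      rw [← map_inv, FreeGroup.inv_mk]; rfl
    rw [integ, integ, e, mul_inv_cancel_right, ed, ed]
    ring

/-- integral along a free group element -/
def J (φ : FreeGroup ι →* G) (u v : G → ℤ) (x : G) (w : FreeGroup ι) : ℤ :=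
  Quot.lift (integ φ u v x) (integ_step u v x) w

theorem J_mk (u v : G → ℤ) (x : G) (L : List (ι × Bool)) :
    J φ u v x (FreeGroup.mk L) = integ φ u v x L := rfl

theorem J_mul (u v : G → ℤ) (x : G) (w w' : FreeGroup ι) :
    J φ u v x (w * w') = J φ u v x w + J φ u v (x * φ w) w' := by
  obtain ⟨L, rfl, -⟩ := exists_list w
  obtain ⟨M, rfl, -⟩ := exists_list w'
  rw [FreeGroup.mul_mk, J_mk, J_mk, J_mk, integ_append]

theorem J_one (u v : G → ℤ) (x : G) : J φ u v x 1 = 0 := rfl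

theorem J_conj (u v : G → ℤ) (x : G) (f r : FreeGroup ι) (hr : φ r = 1) :
    J φ u v x (f⁻¹ * r * f) = J φ u v (x * φ f⁻¹) r := by
  have h := J_mul (φ := φ) u v x f⁻¹ f
  rw [inv_mul_cancel, J_one] at h
  rw [J_mul, J_mul, map_mul, hr, mul_one]
  linarith

theorem J_inv (u v : G → ℤ) (x : G) (r : FreeGroup ι) (hr : φ r = 1) :
    J φ u v x r⁻¹ = - J φ u v x r := by
  have h := J_mul (φ := φ) u v x r r⁻¹
  rw [mul_inv_cancel, J_one, hr, mul_one] at h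
  linarith

/-- 1-Lipschitz -/
def Lip (φ : FreeGroup ι →* G) (u : G → ℤ) : Prop := ∀ x y, |u x - u y| ≤ wdist φ x y

theorem wd_letter (x : G) (s : ι × Bool) : wdist φ x (x * φ (FreeGroup.mk [s])) ≤ 1 := by
  rw [wdist, inv_mul_cancel_left]
  exact (wlen_le _).trans (wnorm_mk_le _)

theorem integ_bound {u v : G → ℤ} (hu : Lip φ u) (hv : Lip φ v) (L : List (ι × Bool)) (x : G)
    (c B : ℤ) (hB : |u x - c| ≤ B) :
    |integ φ u v x L - 2 * c * (v (x * φ (FreeGroup.mk L)) - v x)|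
      ≤ L.length * (2 * (B + L.length)) := by
  induction L generalizing x B with
  | nil => simp [integ, ← FreeGroup.one_eq_mk]
  | cons s L ih =>
    have e : (FreeGroup.mk (s :: L) : FreeGroup ι) = FreeGroup.mk [s] * FreeGroup.mk L := by
      rw [FreeGroup.mul_mk]; rfl
    rw [integ, e, map_mul, ← mul_assoc]
    set y := x * φ (FreeGroup.mk [s]) with hy
    have hd : ((wdist φ x y : ℕ) : ℤ) ≤ 1 := by exact_mod_cast wd_letter x s
    have u1 := (hu x y).trans hd
    have v1 := (hv x y).trans hd
    have hB' : |u y - c| ≤ B + 1 := by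
      rw [abs_le] at *; constructor <;> linarith [hB.1, hB.2, u1.1, u1.2]
    have I := ih y (B + 1) hB'
    have hE : |ed u v x y - 2 * c * (v y - v x)| ≤ 2 * B + 1 := by
      have : ed u v x y - 2 * c * (v y - v x) = ((u x - c) + (u y - c)) * (v y - v x) := by
        rw [ed]; ring
      rw [this, abs_mul]
      have a1 := abs_add_le (u x - c) (u y - c)
      have a2 : |v y - v x| ≤ 1 := by rw [abs_sub_comm]; exact v1
      have a3 := abs_nonneg (u x - c + (u y - c))
      have a4 := abs_nonneg (v y - v x)
      nlinarith
    have hB0 : 0 ≤ B := (abs_nonneg _).trans hB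
    have tri := abs_add_le (ed u v x y - 2 * c * (v y - v x))
      (integ φ u v y L - 2 * c * (v (y * φ (FreeGroup.mk L)) - v y))
    have e3 : ed u v x y + integ φ u v y L - 2 * c * (v (y * φ (FreeGroup.mk L)) - v x) =
      (ed u v x y - 2 * c * (v y - v x)) +
      (integ φ u v y L - 2 * c * (v (y * φ (FreeGroup.mk L)) - v y)) := by ring
    rw [e3]
    refine tri.trans ((add_le_add hE I).trans ?_)
    push_cast [List.length_cons]
    nlinarith

theorem J_bound {u v : G → ℤ} (hu : Lip φ u) (hv : Lip φ v) {l : ℕ} {r : FreeGroup ι}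
    (hr : r ∈ triv φ l) (x : G) : |J φ u v x r| ≤ 2 * l ^ 2 := by
  obtain ⟨hr1, hr2⟩ := hr
  obtain ⟨L, rfl, hL⟩ := exists_list r
  have := integ_bound hu hv L x (u x) 0 (by simp)
  rw [hr2, mul_one, sub_self, mul_zero, sub_zero] at this
  rw [J_mk]
  refine this.trans ?_
  have h1 : (L.length : ℤ) ≤ l := by exact_mod_cast hL.le.trans hr1
  have h0 : (0 : ℤ) ≤ L.length := by positivity
  nlinarith

theorem J_area {u v : G → ℤ} (hu : Lip φ u) (hv : Lip φ v) {l k : ℕ} {w : FreeGroup ι}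
    (hw : AreaLe (triv φ l) w k) (x : G) : |J φ u v x w| ≤ k * (2 * l ^ 2) := by
  obtain ⟨L, rfl, h2, rfl⟩ := hw
  have : φ ((L.map fun p => p.1⁻¹ * p.2 * p.1).prod) = 1 ∧
    |J φ u v x ((L.map fun p => p.1⁻¹ * p.2 * p.1).prod)| ≤ (L.length : ℤ) * (2 * l ^ 2) := by
    induction L with
    | nil => simp [J_one]
    | cons p L ih =>
      obtain ⟨i1, i2⟩ := ih (fun q hq => h2 q (List.mem_cons_of_mem _ hq))
      have hp : φ p.2 = 1 ∧ ∀ y, |J φ u v y p.2| ≤ 2 * l ^ 2 := by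
        rcases h2 p List.mem_cons_self with h | h
        · exact ⟨h.2, fun y => J_bound hu hv h y⟩
        · have h1 : φ p.2 = 1 := by simpa using h.2
          refine ⟨h1, fun y => ?_⟩
          have := J_bound hu hv h y
          rwa [J_inv _ _ _ _ h1, abs_neg] at this
      have hc : φ (p.1⁻¹ * p.2 * p.1) = 1 := by simp [hp.1]
      rw [List.map_cons, List.prod_cons]
      refine ⟨by rw [map_mul, hc, i1, one_mul], ?_⟩
      rw [J_mul, hc, mul_one, J_conj _ _ _ _ _ hp.1]
      refine (abs_add_le _ _).trans ?_
      have := hp.2 (x * φ p.1⁻¹)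
      push_cast [List.length_cons]
      linarith
  exact this.2

/-! ### coarse paths inside sets -/

/-- `Conn φ S n x y`: there is a path of length at most `n` from `x` to `y` inside `S`. -/
inductive Conn (φ : FreeGroup ι →* G) (S : Set G) : ℕ → G → G → Prop
  | refl (n : ℕ) (x : G) : x ∈ S → Conn φ S n x x
  | step (n : ℕ) (x y z : G) : x ∈ S → wdist φ x y ≤ 1 → Conn φ S n y z → Conn φ S (n + 1) x z

theorem Conn.left {S : Set G} {n : ℕ} {x y : G} (h : Conn φ S n x y) : x ∈ S := by
  cases h <;> assumption

theorem Conn.right {S : Set G} {n : ℕ} {x y : G} (h : Conn φ S n x y) : y ∈ S := by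
  induction h <;> assumption

theorem Conn.mono {S T : Set G} {n : ℕ} {x y : G} (h : Conn φ S n x y) (hST : S ⊆ T) {m : ℕ}
    (hm : n ≤ m) : Conn φ T m x y := by
  induction h generalizing m with
  | refl n x hx => exact .refl _ _ (hST hx)
  | step n x y z hx hd _ ih =>
    obtain ⟨m, rfl⟩ : ∃ m', m = m' + 1 := ⟨m - 1, by omega⟩
    exact .step _ _ _ _ (hST hx) hd (ih (by omega))

theorem Conn.trans {S : Set G} {n m : ℕ} {x y z : G} (h : Conn φ S n x y) (h' : Conn φ S m y z) :
    Conn φ S (n + m) x z := by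
  induction h with
  | refl n x hx => exact h'.mono subset_rfl (by omega)
  | step n x y _ hx hd _ ih =>
    exact (Conn.step _ _ _ _ hx hd (ih h')).mono subset_rfl (by omega)

theorem Conn.symm (hφ : Surjective φ) {S : Set G} {n : ℕ} {x y : G} (h : Conn φ S n x y) :
    Conn φ S n y x := by
  induction h with
  | refl n x hx => exact .refl _ _ hx
  | step n x y z hx hd h ih =>
    exact ih.trans (.step 0 y x x h.left (by rwa [wd_comm hφ]) (.refl _ _ hx))

theorem geo_conn {γ : ℕ → G} {n : ℕ} (h : Geo φ γ n) {S : Set G} {i j : ℕ} (hij : i ≤ j)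
    (hj : j ≤ n) (hS : ∀ k, i ≤ k → k ≤ j → γ k ∈ S) : Conn φ S (j - i) (γ i) (γ j) := by
  induction j, hij using Nat.le_induction with
  | base => exact .refl _ _ (hS i le_rfl le_rfl)
  | succ j hij ih =>
    have h1 := ih (by omega) (fun k h1 h2 => hS k h1 (by omega))
    have h2 := h j (j + 1) (by omega) hj
    exact (h1.trans (.step 0 _ (γ (j + 1)) _ (hS j hij (by omega)) (by omega)
      (.refl _ _ (hS (j + 1) (by omega) le_rfl)))).mono subset_rfl (by omega)

theorem geo_conn' (hφ : Surjective φ) {γ : ℕ → G} {n : ℕ} (h : Geo φ γ n) {S : Set G} {i j : ℕ}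
    (hi : i ≤ n) (hj : j ≤ n) (hS : ∀ k, k ≤ n → γ k ∈ S) :
    Conn φ S (wdist φ (γ i) (γ j)) (γ i) (γ j) := by
  rw [h.le hφ hi hj]
  rcases le_total i j with hij | hij
  · exact (geo_conn h hij hj (fun k _ hk => hS k (by omega))).mono subset_rfl (by omega)
  · exact ((geo_conn h hij hi (fun k _ hk => hS k (by omega))).symm hφ).mono subset_rfl (by omega)

theorem ball_conn (hφ : Surjective φ) (x y : G) {r : ℕ} (h : wdist φ x y ≤ r) :
    Conn φ {g | wdist φ x g ≤ r} r x y := by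
  obtain ⟨γ, h0, h1, hγ⟩ := exists_geo hφ x y
  have := geo_conn hγ (S := {g | wdist φ x g ≤ r}) (Nat.zero_le _) le_rfl (by
    intro k _ hk
    have := hγ 0 k (by omega) hk
    rw [h0] at this
    simp only [Set.mem_ofPred_eq]; omega)
  rw [h0, h1] at this
  exact this.mono subset_rfl (by omega)

theorem step_word (hφ : Surjective φ) (u v : G → ℤ) {x y : G} (h : wdist φ x y ≤ 1) :
    ∃ w, wnorm w ≤ 1 ∧ x * φ w = y ∧ J φ u v x w = ed u v x y := by
  obtain ⟨w, hw, hw'⟩ := wlen_spec hφ (x⁻¹ * y)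
  have hxy : x * φ w = y := by rw [hw']; simp
  have hn : wnorm w ≤ 1 := hw.le.trans h
  refine ⟨w, hn, hxy, ?_⟩
  obtain ⟨L, rfl, hL⟩ := exists_list w
  match L, hL with
  | [], _ =>
    rw [← FreeGroup.one_eq_mk, map_one, mul_one] at hxy
    rw [hxy, ed, sub_self, mul_zero]; rfl
  | [s], _ => rw [J_mk, integ, hxy, integ, add_zero]
  | _ :: _ :: _, hL => simp at hL; omega

theorem conn_u (hφ : Surjective φ) (u v : G → ℤ) {S : Set G} {n : ℕ} {x y : G}
    (h : Conn φ S n x y) (c : ℤ) (hc : ∀ s ∈ S, u s = c) :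
    ∃ w, wnorm w ≤ n ∧ x * φ w = y ∧ J φ u v x w = 2 * c * (v y - v x) := by
  induction h with
  | refl n x hx => exact ⟨1, by rw [wnorm_one]; omega, by simp, by simp [J_one]⟩
  | step n x y z hx hd h ih =>
    obtain ⟨w, h1, h2, h3⟩ := ih
    obtain ⟨s, s1, s2, s3⟩ := step_word hφ u v hd
    refine ⟨s * w, (wnorm_mul_le _ _).trans (by omega), by rw [map_mul, ← mul_assoc, s2, h2], ?_⟩
    rw [J_mul, s2, s3, h3, ed, hc x hx, hc y h.left]
    ring

theorem conn_v (hφ : Surjective φ) (u v : G → ℤ) {S : Set G} {n : ℕ} {x y : G}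
    (h : Conn φ S n x y) (c : ℤ) (hc : ∀ s ∈ S, v s = c) :
    ∃ w, wnorm w ≤ n ∧ x * φ w = y ∧ J φ u v x w = 0 := by
  induction h with
  | refl n x hx => exact ⟨1, by rw [wnorm_one]; omega, by simp, by simp [J_one]⟩
  | step n x y z hx hd h ih =>
    obtain ⟨w, h1, h2, h3⟩ := ih
    obtain ⟨s, s1, s2, s3⟩ := step_word hφ u v hd
    refine ⟨s * w, (wnorm_mul_le _ _).trans (by omega), by rw [map_mul, ← mul_assoc, s2, h2], ?_⟩
    rw [J_mul, s2, s3, h3, ed, hc x hx, hc y h.left]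
    ring

theorem exists_sep (hφ : Surjective φ) {S T : Set G} (hS : S.Nonempty) (d : ℕ)
    (h : ∀ s ∈ S, ∀ t ∈ T, d ≤ wdist φ s t) :
    ∃ u : G → ℤ, Lip φ u ∧ (∀ s ∈ S, u s = 0) ∧ (∀ t ∈ T, u t = d) := by
  set D : G → ℕ := fun x => sInf ((fun s => wdist φ s x) '' S) with hD
  have att : ∀ x, ∃ s ∈ S, wdist φ s x = D x := fun x => Nat.sInf_mem (hS.image _)
  have le : ∀ x, ∀ s ∈ S, D x ≤ wdist φ s x := fun x s hs => Nat.sInf_le ⟨s, hs, rfl⟩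
  have lip : ∀ x y, D x ≤ D y + wdist φ x y := by
    intro x y
    obtain ⟨s, hs, e⟩ := att y
    have h1 := le x s hs
    have h2 := wd_tri hφ s y x
    have h3 := wd_comm hφ x y
    omega
  refine ⟨fun x => ((min (D x) d : ℕ) : ℤ), ?_, ?_, ?_⟩
  · intro x y
    have h1 := lip x y
    have h2 := lip y x
    rw [wd_comm hφ y x] at h2
    rw [abs_le]
    constructor <;> (simp only []; omega)
  · intro s hs
    have := le s s hs
    rw [wd_self] at this
    simp only []
    omega
  · intro t ht
    obtain ⟨s, hs, e⟩ := att t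
    have := h s hs t ht
    simp only []
    omega

theorem rectangle (hφ : Surjective φ) {l K : ℕ}
    (hA : ∀ (n : ℕ) (w : FreeGroup ι), φ w = 1 → wnorm w ≤ n →
      ∃ k, AreaLe (triv φ l) w k ∧ k ≤ K * n + K)
    {S₁ S₂ S₃ S₄ : Set G} {n₁ n₂ n₃ n₄ : ℕ} {x₁ x₂ x₃ x₄ : G}
    (h₁ : Conn φ S₁ n₁ x₁ x₂) (h₂ : Conn φ S₂ n₂ x₂ x₃) (h₃ : Conn φ S₃ n₃ x₃ x₄)
    (h₄ : Conn φ S₄ n₄ x₄ x₁) (d₁ d₂ : ℕ)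
    (hd₁ : ∀ s ∈ S₁, ∀ t ∈ S₃, d₁ ≤ wdist φ s t) (hd₂ : ∀ s ∈ S₂, ∀ t ∈ S₄, d₂ ≤ wdist φ s t) :
    d₁ * d₂ ≤ (K * (n₁ + n₂ + n₃ + n₄) + K) * l ^ 2 := by
  obtain ⟨u, hu, u0, u1⟩ := exists_sep hφ ⟨_, h₁.left⟩ d₁ hd₁
  obtain ⟨v, hv, v0, v1⟩ := exists_sep hφ ⟨_, h₂.left⟩ d₂ hd₂
  obtain ⟨w₁, a1, b1, c1⟩ := conn_u hφ u v h₁ 0 u0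
  obtain ⟨w₂, a2, b2, c2⟩ := conn_v hφ u v h₂ 0 v0
  obtain ⟨w₃, a3, b3, c3⟩ := conn_u hφ u v h₃ d₁ u1
  obtain ⟨w₄, a4, b4, c4⟩ := conn_v hφ u v h₄ d₂ v1
  have e : x₁ * φ (w₁ * w₂ * w₃ * w₄) = x₁ := by
    rw [map_mul, map_mul, map_mul, ← mul_assoc, ← mul_assoc, ← mul_assoc, b1, b2, b3, b4]
  have e1 : φ (w₁ * w₂ * w₃ * w₄) = 1 := by simpa using e
  have m1 := wnorm_mul_le w₁ w₂
  have m2 := wnorm_mul_le (w₁ * w₂) w₃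
  have m3 := wnorm_mul_le (w₁ * w₂ * w₃) w₄
  obtain ⟨k, hk, hkn⟩ := hA (n₁ + n₂ + n₃ + n₄) _ e1 (by omega)
  have B := J_area hu hv hk x₁
  rw [J_mul, J_mul, J_mul, map_mul, map_mul, map_mul, ← mul_assoc, ← mul_assoc, ← mul_assoc, b1, b2, b3, c1, c2, c3, c4,
    v0 x₃ h₂.right, v1 x₄ h₄.left] at B
  have B' := (le_abs_self _).trans B
  have hk' : (k : ℤ) * (2 * l ^ 2) ≤ (K * (n₁ + n₂ + n₃ + n₄) + K : ℕ) * (2 * l ^ 2) := by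
    have : (k : ℤ) ≤ ((K * (n₁ + n₂ + n₃ + n₄) + K : ℕ) : ℤ) := by exact_mod_cast hkn
    exact mul_le_mul_of_nonneg_right this (by positivity)
  zify
  push_cast at hk' B'
  nlinarith

/-! ### linear implies hyperbolic -/

theorem two_sides (hφ : Surjective φ) {N D : ℕ} (hD : 1 ≤ D) (T : Thin φ N D) {α β : ℕ → G}
    {a b : ℕ} (hα : Geo φ α a) (hβ : Geo φ β b) (h0 : α 0 = β 0) {i j : ℕ} (hi : i ≤ a)
    (hj : j ≤ b) (p : G) (pα : ∀ k ≤ a, D ≤ wdist φ p (α k)) (pβ : ∀ k ≤ b, D ≤ wdist φ p (β k))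
    (h1 : wdist φ p (α i) ≤ 3 * D) (h2 : wdist φ (α i) (β j) ≤ 6 * D)
    (hN : i + j + wdist φ (α i) (β j) ≤ N) :
    Conn φ {g | D ≤ wdist φ p g} (24 * D) (α i) (β j) := by
  by_cases hs : i < 8 * D
  · have c1 := geo_conn' hφ hα (S := {g | D ≤ wdist φ p g}) hi (Nat.zero_le a) pα
    have c2 := geo_conn' hφ hβ (S := {g | D ≤ wdist φ p g}) (Nat.zero_le b) hj pβ
    have e1 := hα.le hφ hi (Nat.zero_le a)
    have t := wd_tri hφ (β 0) (α i) (β j)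
    rw [h0] at c1 e1
    have c := wd_comm hφ (β 0) (α i)
    exact (c1.trans c2).mono subset_rfl (by omega)
  · push Not at hs
    obtain ⟨η, η0, η1, hη⟩ := exists_geo hφ (α i) (β j)
    have tri := T α η (fun k => β (j - k)) i _ j (hα.mono hi) hη ((hβ.mono hj).rev hφ) η0.symm
      (by simp [η1]) (by simp [h0]) (by omega) (i - 8 * D) (by omega)
    have ds := hα (i - 8 * D) i (by omega) hi
    rcases tri with ⟨k, hk, hd⟩ | ⟨k, hk, hd⟩
    · exfalso
      have t1 := wd_tri hφ (α (i - 8 * D)) (η k) (α i)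
      have e := hη 0 k (by omega) hk
      rw [η0] at e
      have c := wd_comm hφ (η k) (α i)
      omega
    · have c1 := geo_conn' hφ hα (S := {g | D ≤ wdist φ p g}) hi
        (show i - 8 * D ≤ a by omega) pα
      have c2 := ball_conn hφ _ _ hd
      have c3 := geo_conn' hφ hβ (S := {g | D ≤ wdist φ p g}) (show j - k ≤ b by omega) hj pβ
      have c2' : Conn φ {g | D ≤ wdist φ p g} D (α (i - 8 * D)) (β (j - k)) := by
        refine c2.mono ?_ le_rfl
        intro g hg
        simp only [Set.mem_ofPred_eq] at hg ⊢
        have t1 := wd_tri hφ (α (i - 8 * D)) g (α i)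
        have t2 := wd_tri hφ g p (α i)
        have c := wd_comm hφ g p
        omega
      have t1 := wd_tri hφ (β (j - k)) (α (i - 8 * D)) (β j)
      have t2 := wd_tri hφ (α (i - 8 * D)) (α i) (β j)
      have e1 := wd_comm hφ (β (j - k)) (α (i - 8 * D))
      have e2 := wd_comm hφ (α i) (α (i - 8 * D))
      exact ((c1.trans c2').trans c3).mono subset_rfl (by omega)

theorem Thin.mono {N D E : ℕ} (h : Thin φ N D) (hE : D ≤ E) : Thin φ N E := by
  intro α β γ a b c h1 h2 h3 h4 h5 h6 h7 i hi
  rcases h α β γ a b c h1 h2 h3 h4 h5 h6 h7 i hi with ⟨j, hj, hd⟩ | ⟨j, hj, hd⟩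
  · exact Or.inl ⟨j, hj, hd.trans hE⟩
  · exact Or.inr ⟨j, hj, hd.trans hE⟩

theorem thin_self (N : ℕ) : Thin φ N N := by
  intro α β γ a b c h1 h2 h3 h4 h5 h6 h7 i hi
  left
  refine ⟨0, by omega, ?_⟩
  rw [← h4, h1 i a hi le_rfl]
  omega

theorem thin_bound (hφ : Surjective φ) {K : ℕ}
    (hR : ∀ (S₁ S₂ S₃ S₄ : Set G) (n₁ n₂ n₃ n₄ : ℕ) (x₁ x₂ x₃ x₄ : G),
      Conn φ S₁ n₁ x₁ x₂ → Conn φ S₂ n₂ x₂ x₃ → Conn φ S₃ n₃ x₃ x₄ → Conn φ S₄ n₄ x₄ x₁ →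
      ∀ (d₁ d₂ : ℕ), (∀ s ∈ S₁, ∀ t ∈ S₃, d₁ ≤ wdist φ s t) →
      (∀ s ∈ S₂, ∀ t ∈ S₄, d₂ ≤ wdist φ s t) → d₁ * d₂ ≤ K * (n₁ + n₂ + n₃ + n₄) + K) (N : ℕ) :
    Thin φ N (91 * K + 2) := by
  classical
  have ex : ∃ D, Thin φ N D := ⟨N, thin_self N⟩
  have hT := Nat.find_spec ex
  have hmin : ∀ D' < Nat.find ex, ¬ Thin φ N D' := fun D' h => Nat.find_min ex h
  set D := Nat.find ex with hDdef
  clear_value D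
  clear hDdef ex
  by_cases hDK : D ≤ 91 * K + 2
  · exact hT.mono hDK
  exfalso
  push Not at hDK
  have hneg := hmin (D - 1) (by omega)
  simp only [Thin] at hneg
  push Not at hneg
  obtain ⟨α, β, γ, a, b, c, hα, hβ, hγ, eαβ, eβγ, eγα, hper, i, hi, fβ', fγ'⟩ := hneg
  have fβ : ∀ k ≤ b, D ≤ wdist φ (α i) (β k) := fun k hk => by have := fβ' k hk; omega
  have fγ : ∀ k ≤ c, D ≤ wdist φ (α i) (γ k) := fun k hk => by have := fγ' k hk; omega
  clear fβ' fγ'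
  have hiD : D ≤ i := by
    have := fγ c le_rfl
    rw [eγα, hα.le hφ hi (Nat.zero_le _)] at this
    omega
  have haD : D + i ≤ a := by
    have := fβ 0 (by omega)
    rw [← eαβ, hα.le hφ hi le_rfl] at this
    omega
  set P : Set G := {g | D ≤ wdist φ (α i) g} with hP
  set Q : Set G := {q | (∃ j ≤ b, q = β j) ∨ (∃ j ≤ c, q = γ j)} with hQ
  have near : ∀ k ≤ a, (i + 2 * D ≤ k ∨ k + 2 * D ≤ i ∨ k = 0 ∨ k = a) →
      ∃ q, q ∈ Q ∧ Conn φ P D (α k) q ∧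
        wdist φ (α k) q ≤ D := by
    intro k hk hcase
    have far : ∀ q, (i + 2 * D ≤ k ∨ k + 2 * D ≤ i) → wdist φ (α k) q ≤ D →
        Conn φ P D (α k) q := by
      intro q hc hd
      refine (ball_conn hφ _ _ hd).mono ?_ le_rfl
      intro g hg
      simp only [hP, Set.mem_ofPred_eq] at hg ⊢
      have t := wd_tri hφ (α i) g (α k)
      have e := hα.le hφ hi hk
      have s := wd_comm hφ g (α k)
      omega
    have gen : (i + 2 * D ≤ k ∨ k + 2 * D ≤ i) → ∃ q, q ∈ Q ∧
        Conn φ P D (α k) q ∧ wdist φ (α k) q ≤ D := by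
      intro hc
      rcases hT α β γ a b c hα hβ hγ eαβ eβγ eγα hper k hk with ⟨j, hj, hd⟩ | ⟨j, hj, hd⟩
      · exact ⟨β j, Or.inl ⟨j, hj, rfl⟩, far _ hc hd, hd⟩
      · exact ⟨γ j, Or.inr ⟨j, hj, rfl⟩, far _ hc hd, hd⟩
    rcases hcase with h | h | rfl | rfl
    · exact gen (Or.inl h)
    · exact gen (Or.inr h)
    · refine ⟨α 0, Or.inr ⟨c, le_rfl, eγα.symm⟩, .refl _ _ ?_, by rw [wd_self]; omega⟩
      rw [← eγα]; exact fγ c le_rfl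
    · refine ⟨α k, Or.inl ⟨0, by omega, eαβ⟩, .refl _ _ ?_, by rw [wd_self]; omega⟩
      rw [eαβ]; exact fβ 0 (by omega)
  obtain ⟨k₁, hk₁⟩ : ∃ k₁, k₁ = i - 2 * D := ⟨_, rfl⟩
  obtain ⟨k₂, hk₂⟩ : ∃ k₂, k₂ = min (i + 2 * D) a := ⟨_, rfl⟩
  obtain ⟨q₁, hq₁, C₁, d₁⟩ := near k₁ (by omega) (by omega)
  obtain ⟨q₂, hq₂, C₂, d₂⟩ := near k₂ (by omega) (by omega)
  have e1 := hα.le hφ hi (show k₁ ≤ a by omega)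
  have e2 := hα.le hφ hi (show k₂ ≤ a by omega)
  have p1 : wdist φ (α i) q₁ ≤ 3 * D := by
    have := wd_tri hφ (α i) (α k₁) q₁
    omega
  have p2 : wdist φ (α i) q₂ ≤ 3 * D := by
    have := wd_tri hφ (α i) (α k₂) q₂
    omega
  have p3 : wdist φ q₁ q₂ ≤ 6 * D := by
    have := wd_tri hφ q₁ (α i) q₂
    have := wd_comm hφ q₁ (α i)
    omega
  have mixed : ∀ j ≤ b, ∀ j' ≤ c, wdist φ (α i) (β j) ≤ 3 * D → wdist φ (β j) (γ j') ≤ 6 * D →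
      Conn φ P (24 * D) (β j) (γ j') := by
    intro j hj j' hj' h1 h2
    have bj : β (b - (b - j)) = β j := by congr 1; omega
    have := two_sides hφ (by omega) hT (hβ.rev hφ) hγ (by simpa using eβγ)
      (show b - j ≤ b by omega) hj' (α i) (fun k hk => fβ _ (by omega)) fγ
      (by simpa only [bj] using h1) (by simpa only [bj] using h2) (by
        simp only [bj]
        have t1 := wd_tri hφ (β j) (β 0) (γ j')
        have t2 := wd_tri hφ (β 0) (α 0) (γ j')
        have e1 := hβ.le hφ hj (Nat.zero_le b)
        have e2 := hα.le hφ le_rfl (Nat.zero_le a)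
        have e3 := hγ.le hφ le_rfl hj'
        rw [eαβ] at e2
        rw [eγα] at e3
        omega)
    simpa only [bj] using this
  have mid : Conn φ P (24 * D) q₂ q₁ := by
    rcases hq₁ with ⟨j, hj, rfl⟩ | ⟨j, hj, rfl⟩ <;> rcases hq₂ with ⟨j', hj', rfl⟩ | ⟨j', hj', rfl⟩
    · exact ((geo_conn' hφ hβ hj hj' fβ).symm hφ).mono subset_rfl (by omega)
    · exact (mixed j hj j' hj' p1 p3).symm hφ
    · exact mixed j' hj' j hj p2 (by rwa [wd_comm hφ])
    · exact ((geo_conn' hφ hγ hj hj' fγ).symm hφ).mono subset_rfl (by omega)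
  obtain ⟨h, hh⟩ : ∃ h, h = D / 2 := ⟨_, rfl⟩
  have A1 := geo_conn hα (S := α '' Set.Icc (i - h) (i + h)) (show i - h ≤ i + h by omega) (by omega)
    (fun k h1 h2 => ⟨k, ⟨h1, h2⟩, rfl⟩)
  have A2 := geo_conn hα (S := α '' Set.Icc (i + h) k₂) (show i + h ≤ k₂ by omega) (by omega)
    (fun k h1 h2 => ⟨k, ⟨h1, h2⟩, rfl⟩)
  have A4 := geo_conn hα (S := α '' Set.Icc k₁ (i - h)) (show k₁ ≤ i - h by omega) (by omega)
    (fun k h1 h2 => ⟨k, ⟨h1, h2⟩, rfl⟩)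
  have A3 := (C₂.trans mid).trans (C₁.symm hφ)
  have key := hR _ _ _ _ _ _ _ _ _ _ _ _ A1 A2 A3 A4 (D - h) (2 * h) (by
      rintro _ ⟨k, ⟨hk1, hk2⟩, rfl⟩ t ht
      have ht' : D ≤ wdist φ (α i) t := ht
      have t1 := wd_tri hφ (α i) (α k) t
      have e := hα.le hφ hi (show k ≤ a by omega)
      omega) (by
      rintro _ ⟨k, ⟨hk1, hk2⟩, rfl⟩ _ ⟨k', ⟨hk1', hk2'⟩, rfl⟩
      have e := hα.le hφ (show k ≤ a by omega) (show k' ≤ a by omega)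
      omega)
  have hlen : (i + h - (i - h)) + (k₂ - (i + h)) + (D + 24 * D + D) + (i - h - k₁) ≤ 90 * h := by
    omega
  have key2 : (D - h) * (2 * h) ≤ K * (90 * h) + K * h := by
    refine key.trans (add_le_add (Nat.mul_le_mul_left _ hlen) ?_)
    exact Nat.le_mul_of_pos_right _ (by omega)
  have key3 : h * (2 * h) ≤ (D - h) * (2 * h) := Nat.mul_le_mul_right _ (by omega)
  have key4 : h * (2 * h) ≤ h * (91 * K) := by nlinarith
  have := Nat.le_of_mul_le_mul_left key4 (by omega)
  omega

theorem hyp_of_spec [Finite ι] (hφ : Surjective φ)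
    (hFP : ∃ R : Set (FreeGroup ι), R.Finite ∧ φ.ker = Subgroup.normalClosure R)
    (h : SpecLE (isoSpecR φ) linSpec) : IsHyperbolic φ := by
  obtain ⟨R, hRf, hker⟩ := hFP
  obtain ⟨k, hk, hkR⟩ : ∃ k, 0 < k ∧ R ⊆ triv φ k := by
    obtain ⟨B, hB⟩ := (hRf.image wnorm).bddAbove
    refine ⟨B + 1, by omega, fun r hr => ⟨?_, ?_⟩⟩
    · have := hB ⟨r, hr, rfl⟩
      omega
    · have : r ∈ φ.ker := by rw [hker]; exact Subgroup.subset_normalClosure hr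
      exact this
  obtain ⟨C, hC, hs⟩ := h
  set m := C * k with hm
  have hm0 : 0 < m := Nat.mul_pos hC hk
  have hkm : k ≤ C * m := by rw [hm]; nlinarith [Nat.mul_pos hC hC]
  have hA : ∀ (n : ℕ) (w : FreeGroup ι), φ w = 1 → wnorm w ≤ n →
      ∃ l, AreaLe (triv φ (C * m)) w l ∧ l ≤ (C * C + 2 * C) * n + (C * C + 2 * C) := by
    intro n w hw hn
    have hwk : w ∈ Subgroup.normalClosure (triv φ k) := by
      have : w ∈ φ.ker := hw
      rw [hker] at this
      exact Subgroup.normalClosure_mono hkR this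
    have hwm : w ∈ Subgroup.normalClosure (triv φ (C * m)) :=
      Subgroup.normalClosure_mono (triv_mono hkm) hwk
    refine ⟨_, area_spec hwm, ?_⟩
    have bdd : BddAbove (area (triv φ (C * m)) ''
        {w | w ∈ Subgroup.normalClosure (triv φ k) ∧ wnorm w ≤ n + 1}) :=
      (((ball_finite (n + 1)).subset (fun x hx => hx.2)).image _).bddAbove
    have h1 : area (triv φ (C * m)) w ≤ isoSpec φ k (C * m) (n + 1) :=
      le_csSup bdd ⟨w, ⟨hwk, by omega⟩, rfl⟩
    have h2 := hs k m (n + 1) hk hm0 (by omega) le_rfl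
    simp only [isoSpecR, linSpec] at h2
    have h3 : (area (triv φ (C * m)) w : ℝ) ≤ (isoSpec φ k (C * m) (n + 1) : ℝ) := by
      exact_mod_cast h1
    have hm1 : (1 : ℝ) ≤ m := by exact_mod_cast hm0
    have h4 : ((C * (n + 1) : ℕ) : ℝ) / m ≤ ((C * (n + 1) : ℕ) : ℝ) :=
      div_le_self (by positivity) hm1
    have h5 : (C : ℝ) * ((n + 1 : ℕ) : ℝ) / m ≤ (C : ℝ) * ((n + 1 : ℕ) : ℝ) :=
      div_le_self (by positivity) hm1
    have h6 : (C : ℝ) * (((C * (n + 1) : ℕ) : ℝ) / m) ≤ C * ((C * (n + 1) : ℕ) : ℝ) :=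
      mul_le_mul_of_nonneg_left h4 (by positivity)
    have h7 : (area (triv φ (C * m)) w : ℝ) ≤
        ((C * (C * (n + 1)) + C * (n + 1) + C : ℕ) : ℝ) := by
      push_cast at *
      linarith
    have h8 : area (triv φ (C * m)) w ≤ C * (C * (n + 1)) + C * (n + 1) + C := by
      exact_mod_cast h7
    nlinarith [Nat.zero_le (C * n)]
  have T := thin_bound hφ (K := (C * C + 2 * C) * (C * m) ^ 2) (by
    intro S₁ S₂ S₃ S₄ n₁ n₂ n₃ n₄ x₁ x₂ x₃ x₄ h1 h2 h3 h4 d₁ d₂ e1 e2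
    refine (rectangle hφ hA h1 h2 h3 h4 d₁ d₂ e1 e2).trans (le_of_eq ?_)
    ring)
  exact ⟨_, Nat.cast_nonneg _, hyp_of_thin hφ T⟩

end helpers

/-- A finitely presented group is hyperbolic iff its isoperimetric
spectrum is linear. -/
theorem hyperbolic_iff_linear_isoSpec {G : Type} [Group G] {a : ℕ}
    (φ : FreeGroup (Fin a) →* G) (hφ : Surjective φ)
    (hFP : ∃ R : Set (FreeGroup (Fin a)), R.Finite ∧ φ.ker = Subgroup.normalClosure R) :
    IsHyperbolic φ ↔ SpecEquiv (isoSpecR φ) linSpec := by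
  exact ⟨fun h => ⟨spec_of_hyp hφ h, linSpec_le⟩, fun h => hyp_of_spec hφ hFP h.1⟩

end IsoSpecPaper
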